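/- If the two smoothness indicators are equal, the third-order WENO reconstruction at the Gauss points of I₀ coincides with the high-order reconstruction: let p₀ be the degree-≤1 polynomial with cell averages a on I₋₁ and b on I₀, p₁ the degree-≤1 polynomial with cell averages b on I₀ and c on I₁, and M the degree-≤2 polynomial with cell averages a, b, c on I₋₁, I₀, I₁. For ε > 0 and β₀, β₁ ≥ 0 with β₀ = β₁, define ω̄ᵢ = (1/2)/(ε + βᵢ)² and ωᵢ = ω̄ᵢ/(ω̄₀ + ω̄₁). Then ω₀ = ω₁ = 1/2 and, for x_G = ±h/(2√3), ω₀·p₀(x_G) + ω₁·p₁(x_G) = M(x_G). -/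

import Mathlib

open Polynomial

/-!
A polynomial `p` of degree at most `2` with `x²`-coefficient `k` has average `p(m) + k h² / 12`
over the cell of centre `m` and width `h`. The two Gauss points are the solutions of
`(x - m)² = h² / 12`, so there the quadratic term of `p` accounts exactly for the difference between
the average and `p(m)`: `p(x)` is the average over the cell plus the central difference of the
neighbouring averages times `x - m`. The mean of the two linear reconstructions is the line with
this same value and slope, and equal smoothness indicators make the weights equal.
-/

theorem eval_sub_eval_of_degree_le_two {R : Type*} [CommRing R] {p : R[X]} (hp : p.degree ≤ 2)
    (x y : R) :
    p.eval x - p.eval y = (p.coeff 1 + p.coeff 2 * (x + y)) * (x - y) := by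
  have hn : p.natDegree < 3 := Nat.lt_succ_of_le (natDegree_le_of_degree_le hp)
  simp only [eval_eq_sum_range' hn, Finset.sum_range_succ, Finset.sum_range_zero]
  ring

theorem integral_polynomial_eval {p : ℝ[X]} {n : ℕ} (hp : p.natDegree < n) (u v : ℝ) :
    ∫ x in u..v, p.eval x =
      ∑ i ∈ Finset.range n, p.coeff i * ((v ^ (i + 1) - u ^ (i + 1)) / (i + 1)) := by
  simp_rw [eval_eq_sum_range' hp]
  rw [intervalIntegral.integral_finsetSum fun i _ ↦
    (Continuous.intervalIntegrable (by fun_prop) u v)]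
  simp_rw [intervalIntegral.integral_const_mul, integral_pow]

/-- The average of `f` over the cell of width `h` centred at `m`. For `h = 0` it is `0`, not
`f m`. -/
noncomputable def cellAverage (h m : ℝ) (f : ℝ → ℝ) : ℝ :=
  (1 / h) * ∫ x in (m - h / 2)..(m + h / 2), f x

theorem one_div_mul_integral_eq_cellAverage {h m u v : ℝ} (hu : u = m - h / 2)
    (hv : v = m + h / 2) (f : ℝ → ℝ) : (1 / h) * ∫ x in u..v, f x = cellAverage h m f := by
  rw [hu, hv, cellAverage]

section Reconstruction

variable {h m x : ℝ} {p p₀ p₁ M : ℝ[X]}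

theorem cellAverage_of_degree_le_two (hh : h ≠ 0) (hp : p.degree ≤ 2) :
    cellAverage h m p.eval = p.eval m + p.coeff 2 * (h ^ 2 / 12) := by
  have hn : p.natDegree < 3 := Nat.lt_succ_of_le (natDegree_le_of_degree_le hp)
  rw [cellAverage, integral_polynomial_eval hn]
  simp only [eval_eq_sum_range' hn, Finset.sum_range_succ, Finset.sum_range_zero]
  push_cast
  field_simp
  ring

theorem eval_eq_interpolation_cellAverage (hh : h ≠ 0) (hp : p.degree ≤ 1) {n : ℝ}
    (hnm : n ≠ m) :
    p.eval x = cellAverage h m p.eval +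
      (cellAverage h n p.eval - cellAverage h m p.eval) / (n - m) * (x - m) := by
  have hp2 : p.degree ≤ 2 := hp.trans (by norm_num)
  have hcoeff : p.coeff 2 = 0 := coeff_eq_zero_of_degree_lt (hp.trans_lt (by norm_num))
  have haverage (k : ℝ) : cellAverage h k p.eval = p.eval k := by
    rw [cellAverage_of_degree_le_two hh hp2, hcoeff, zero_mul, add_zero]
  rw [haverage, haverage, eval_sub_eval_of_degree_le_two hp2, hcoeff,
    mul_div_cancel_right₀ _ (sub_ne_zero.mpr hnm), ← sub_eq_iff_eq_add',
    eval_sub_eval_of_degree_le_two hp2, hcoeff, zero_mul, zero_mul]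

theorem eval_gaussPoint_eq_centralDifference (hh : h ≠ 0) (hp : p.degree ≤ 2)
    (hx : (x - m) ^ 2 = h ^ 2 / 12) :
    p.eval x = cellAverage h m p.eval +
      (cellAverage h (m + h) p.eval - cellAverage h (m - h) p.eval) / (2 * h) * (x - m) := by
  have hslope : (cellAverage h (m + h) p.eval - cellAverage h (m - h) p.eval) / (2 * h) =
      p.coeff 1 + 2 * p.coeff 2 * m := by
    rw [cellAverage_of_degree_le_two hh hp, cellAverage_of_degree_le_two hh hp,
      add_sub_add_right_eq_sub, eval_sub_eval_of_degree_le_two hp]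
    field_simp
    ring
  rw [hslope, cellAverage_of_degree_le_two hh hp, ← hx]
  linear_combination eval_sub_eval_of_degree_le_two hp x m

theorem half_linear_add_half_linear_eq_quadratic_at_gaussPoint (hh : h ≠ 0)
    (hp₀ : p₀.degree ≤ 1) (hp₁ : p₁.degree ≤ 1) (hM : M.degree ≤ 2)
    (hleft : cellAverage h (m - h) p₀.eval = cellAverage h (m - h) M.eval)
    (hcentre₀ : cellAverage h m p₀.eval = cellAverage h m M.eval)
    (hcentre₁ : cellAverage h m p₁.eval = cellAverage h m M.eval)
    (hright : cellAverage h (m + h) p₁.eval = cellAverage h (m + h) M.eval)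
    (hx : (x - m) ^ 2 = h ^ 2 / 12) :
    1 / 2 * p₀.eval x + 1 / 2 * p₁.eval x = M.eval x := by
  have hm_sub : m - h ≠ m := by simpa using hh
  have hm_add : m + h ≠ m := by simpa using hh
  rw [eval_eq_interpolation_cellAverage hh hp₀ hm_sub,
    eval_eq_interpolation_cellAverage hh hp₁ hm_add,
    eval_gaussPoint_eq_centralDifference hh hM hx, hleft, hcentre₀, hcentre₁, hright,
    sub_sub_cancel_left, add_sub_cancel_left]
  field_simp
  ring

end Reconstruction

theorem gaussPoint_sq (h : ℝ) : (h / (2 * √3)) ^ 2 = h ^ 2 / 12 := by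
  rw [div_pow, mul_pow, Real.sq_sqrt zero_le_three]
  norm_num

theorem normalized_weight_div_common {K : Type*} [Field K] {s : K} (hs : s ≠ 0)
    (γ γ' : K) : γ / s / (γ / s + γ' / s) = γ / (γ + γ') := by
  rw [← add_div, div_div_div_cancel_right₀ hs]

/-- If the two smoothness indicators are equal, the third-order WENO reconstruction at
the Gauss points of `I₀ = [−h/2, h/2]` coincides with the high-order reconstruction:
with `p₀` (degree ≤ 1) having cell averages `a` on `I₋₁ = [−3h/2, −h/2]` and `b` on `I₀`,
`p₁` (degree ≤ 1) having cell averages `b` on `I₀` and `c` on `I₁ = [h/2, 3h/2]`, and `M`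
(degree ≤ 2) having cell averages `a`, `b`, `c` on `I₋₁`, `I₀`, `I₁`, and with `ε > 0`,
`β₀, β₁ ≥ 0`, `β₀ = β₁`, the nonlinear weights `ωᵢ = ω̄ᵢ/(ω̄₀+ω̄₁)`, where
`ω̄ᵢ = (1/2)/(ε+βᵢ)²`, satisfy `ω₀ = ω₁ = 1/2`, and at both Gauss points
`x_G = ±h/(2√3)` one has `ω₀ p₀(x_G) + ω₁ p₁(x_G) = M(x_G)`. -/
theorem weno3_equal_smoothness_gives_high_order (h : ℝ) (hh : 0 < h)
    (p₀ p₁ M : Polynomial ℝ)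
    (hp₀deg : p₀.degree ≤ 1) (hp₁deg : p₁.degree ≤ 1) (hMdeg : M.degree ≤ 2)
    (a b c : ℝ)
    (hp₀a : (1 / h) * ∫ x in (-(3 * h / 2))..(-(h / 2)), p₀.eval x = a)
    (hp₀b : (1 / h) * ∫ x in (-(h / 2))..(h / 2), p₀.eval x = b)
    (hp₁b : (1 / h) * ∫ x in (-(h / 2))..(h / 2), p₁.eval x = b)
    (hp₁c : (1 / h) * ∫ x in (h / 2)..(3 * h / 2), p₁.eval x = c)
    (hMa : (1 / h) * ∫ x in (-(3 * h / 2))..(-(h / 2)), M.eval x = a)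
    (hMb : (1 / h) * ∫ x in (-(h / 2))..(h / 2), M.eval x = b)
    (hMc : (1 / h) * ∫ x in (h / 2)..(3 * h / 2), M.eval x = c)
    (ε β₀ β₁ : ℝ) (hε : 0 < ε) (hβ₀ : 0 ≤ β₀) (hβ₁ : 0 ≤ β₁) (hββ : β₀ = β₁) :
    let w₀ : ℝ := (1 / 2) / (ε + β₀) ^ 2
    let w₁ : ℝ := (1 / 2) / (ε + β₁) ^ 2
    let ω₀ : ℝ := w₀ / (w₀ + w₁)
    let ω₁ : ℝ := w₁ / (w₀ + w₁)
    ω₀ = 1 / 2 ∧ ω₁ = 1 / 2 ∧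
    ∀ xG : ℝ, (xG = -(h / (2 * Real.sqrt 3)) ∨ xG = h / (2 * Real.sqrt 3)) →
      ω₀ * p₀.eval xG + ω₁ * p₁.eval xG = M.eval xG := by
  intro w₀ w₁ ω₀ ω₁
  have hs : (ε + β₁) ^ 2 ≠ 0 := by positivity
  have hω : ω₀ = 1 / 2 ∧ ω₁ = 1 / 2 := by
    have hhalf := normalized_weight_div_common hs (1 / 2 : ℝ) (1 / 2)
    rw [add_halves, div_one] at hhalf
    subst hββ
    exact ⟨hhalf, hhalf⟩
  refine ⟨hω.1, hω.2, fun xG hxG ↦ ?_⟩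
  have hxG_sq : (xG - 0) ^ 2 = h ^ 2 / 12 := by
    rcases hxG with rfl | rfl <;> simp only [sub_zero, neg_sq, gaussPoint_sq]
  have hleft := one_div_mul_integral_eq_cellAverage (h := h) (m := 0 - h)
    (u := -(3 * h / 2)) (v := -(h / 2)) (by ring) (by ring)
  have hcentre := one_div_mul_integral_eq_cellAverage (h := h) (m := 0)
    (u := -(h / 2)) (v := h / 2) (by ring) (by ring)
  have hright := one_div_mul_integral_eq_cellAverage (h := h) (m := 0 + h)
    (u := h / 2) (v := 3 * h / 2) (by ring) (by ring)
  rw [hleft] at hp₀a hMa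
  rw [hcentre] at hp₀b hp₁b hMb
  rw [hright] at hp₁c hMc
  rw [hω.1, hω.2]
  exact half_linear_add_half_linear_eq_quadratic_at_gaussPoint hh.ne' hp₀deg hp₁deg hMdeg
    (hp₀a.trans hMa.symm) (hp₀b.trans hMb.symm) (hp₁b.trans hMb.symm) (hp₁c.trans hMc.symm) hxG_sq
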